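/- Let Δ be a smooth fan in ℝ^n with respect to the lattice ℤ^n and let C = C(e^1, e^2) be a two-dimensional cone of Δ. Then: (1) the elementary stellar subdivision _CΔ is again a smooth fan; (2) _CΔ is a subdivision of Δ: every cone of _CΔ is contained in some cone of Δ and the union of the cones of _CΔ equals the union of the cones of Δ. -/

import Mathlib

/-- The canonical embedding of `ℤ^n` into `ℝ^n`. -/
noncomputable def toR {n : ℕ} (x : Fin n → ℤ) : Fin n → ℝ := fun i => (x i : ℝ)

/-- The cone of nonnegative real linear combinations of the finite set `s` of integer
vectors. -/
noncomputable def coneOf {n : ℕ} (s : Finset (Fin n → ℤ)) : Set (Fin n → ℝ) :=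
  {v | ∃ c : (Fin n → ℤ) → ℝ, (∀ x, 0 ≤ c x) ∧ v = ∑ x ∈ s, c x • toR x}

/-- A smooth fan in `ℝ^n` with respect to the lattice `ℤ^n`. -/
def IsSmoothFan {n : ℕ} (Δ : Finset (Finset (Fin n → ℤ))) : Prop :=
  (∀ s ∈ Δ, LinearIndependent ℝ (fun x : s => toR (x : Fin n → ℤ))) ∧
  (∀ s ∈ Δ, ∃ P : Submodule ℤ (Fin n → ℤ),
      IsCompl (Submodule.span ℤ (s : Set (Fin n → ℤ))) P) ∧
  (∀ s ∈ Δ, ∀ t ⊆ s, t ∈ Δ) ∧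
  (∀ s ∈ Δ, ∀ t ∈ Δ,
      (∃ u ⊆ s, coneOf s ∩ coneOf t = coneOf u) ∧
      (∃ u ⊆ t, coneOf s ∩ coneOf t = coneOf u))

/-- The elementary stellar subdivision `_CΔ` of `Δ` along the two dimensional cone
`C = C(e^1, e^2)`: every cone `C(e^1, e^2, w^1, …, w^t)` containing `C` is replaced by the two
cones `C(e^1, e^1+e^2, w^1, …, w^t)` and `C(e^1+e^2, e^2, w^1, …, w^t)`, and all faces of
these new cones are adjoined. -/
def stellar {n : ℕ} (Δ : Finset (Finset (Fin n → ℤ))) (e1 e2 : Fin n → ℤ) :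
    Finset (Finset (Fin n → ℤ)) :=
  Δ.filter (fun s => ¬ ({e1, e2} : Finset (Fin n → ℤ)) ⊆ s) ∪
    (Δ.filter (fun s => ({e1, e2} : Finset (Fin n → ℤ)) ⊆ s)).biUnion
      (fun s => (insert (e1 + e2) (s.erase e2)).powerset ∪
        (insert (e1 + e2) (s.erase e1)).powerset)

/-!
The generators of a smooth cone are the indecomposable lattice points of that cone, so they are
determined by the cone as a set. Hence a family of unimodular sets closed under subsets is a smooth
fan exactly when a vector has at most one expression as a combination with positive coefficients of
the elements of a member of the family.

Substituting `e1 + e2` turns such an expression over `_CΔ` into one over `Δ` of the same vector.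
This is a bijection: the inverse moves the smaller of the coefficients of `e1` and `e2` to
`e1 + e2`. So uniqueness of expressions and the union of the cones carry over from `Δ` to `_CΔ`.
Unimodularity carries over by an explicit change of the dual linear forms.
-/

open scoped NNReal

section Unimodular

variable {R M : Type*} [CommRing R] [AddCommGroup M] [Module R M]

/-- The linear forms `f x`, for `x ∈ s`, are dual to the elements of the finite set `s`; the values
of `f` outside `s` are irrelevant. -/
structure IsDualFamily (f : M → Module.Dual R M) (s : Finset M) : Prop where
  apply_self : ∀ x ∈ s, f x x = 1
  apply_of_ne : ∀ x ∈ s, ∀ y ∈ s, x ≠ y → f x y = 0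

variable (R) in
/-- A finite set is unimodular if it admits a dual family of linear forms, equivalently if it is a
basis of a direct summand (see `isUnimodular_iff`). These are the generating sets of smooth cones.
The formulation by linear forms makes the behaviour under faces and subdivisions explicit. -/
def IsUnimodular (s : Finset M) : Prop :=
  ∃ f : M → Module.Dual R M, IsDualFamily f s

variable {f : M → Module.Dual R M} {s t : Finset M} {x y : M}

lemma IsUnimodular.mono (hs : IsUnimodular R s) (hts : t ⊆ s) : IsUnimodular R t :=
  hs.imp fun _ hf => ⟨fun x hx => hf.apply_self x (hts hx),
    fun x hx y hy => hf.apply_of_ne x (hts hx) y (hts hy)⟩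

lemma IsUnimodular.zero_notMem [Nontrivial R] (hs : IsUnimodular R s) : (0 : M) ∉ s := by
  obtain ⟨f, hf⟩ := hs
  intro h
  simpa using hf.apply_self _ h

lemma IsDualFamily.linearIndepOn (hf : IsDualFamily f s) : LinearIndepOn R id (s : Set M) :=
  .of_pairwise_dual_eq_zero_one _ (fun x : s => f x)
    (fun x y hxy => hf.apply_of_ne _ x.2 _ y.2 (Subtype.coe_ne_coe.2 hxy))
    (fun x => hf.apply_self _ x.2)

lemma IsDualFamily.sum_smul_eq_self (hf : IsDualFamily f s)
    (hy : y ∈ Submodule.span R (s : Set M)) : ∑ x ∈ s, f x y • x = y := by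
  have h : Set.EqOn (∑ x ∈ s, (f x).smulRight x : M →ₗ[R] M) (LinearMap.id (R := R)) s := by
    intro z hz
    simp only [LinearMap.coe_sum, Finset.sum_apply, LinearMap.smulRight_apply, LinearMap.id_apply]
    rw [Finset.sum_eq_single_of_mem z hz
      fun x hx hxz => by rw [hf.apply_of_ne _ hx _ hz hxz, zero_smul], hf.apply_self _ hz, one_smul]
  simpa using LinearMap.eqOn_span h hy

lemma IsDualFamily.exists_isCompl (hf : IsDualFamily f s) :
    ∃ P : Submodule R M, IsCompl (Submodule.span R (s : Set M)) P := by
  have hproj : LinearMap.IsProj (Submodule.span R (s : Set M))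
      (∑ x ∈ s, (f x).smulRight x : M →ₗ[R] M) :=
    { map_mem := fun y => by
        simpa using Submodule.sum_smul_mem _ _ fun x hx => Submodule.subset_span hx
      map_id := fun y hy => by simpa using hf.sum_smul_eq_self hy }
  exact ⟨_, hproj.isCompl⟩

lemma isUnimodular_of_isCompl (hs : LinearIndepOn R id (s : Set M)) {P : Submodule R M}
    (hP : IsCompl (Submodule.span R (s : Set M)) P) : IsUnimodular R s := by
  classical
  have hrange : Set.range (fun x : (s : Set M) => id (x : M)) = s := Subtype.range_coe
  rw [← hrange] at hP
  let b := Module.Basis.span hs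
  let f (x : M) : Module.Dual R M :=
    if hx : x ∈ s then b.coord ⟨x, hx⟩ ∘ₗ Submodule.projectionOnto _ P hP else 0
  have hf : ∀ x (hx : x ∈ s) y (hy : y ∈ s), f x y = b.coord ⟨x, hx⟩ (b ⟨y, hy⟩) := by
    intro x hx y hy
    have hby : (b ⟨y, hy⟩ : M) = y := congrArg Subtype.val (Module.Basis.span_apply hs ⟨y, hy⟩)
    rw [← Submodule.projectionOnto_apply_left hP (b ⟨y, hy⟩), hby]
    simp only [f, dif_pos hx, LinearMap.comp_apply]
  exact ⟨f, fun x hx => by simp [hf x hx x hx],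
    fun x hx y hy hxy => by simp [hf x hx y hy, hxy.symm]⟩

lemma isUnimodular_iff : IsUnimodular R s ↔
    LinearIndepOn R id (s : Set M) ∧
      ∃ P : Submodule R M, IsCompl (Submodule.span R (s : Set M)) P :=
  ⟨fun ⟨_, hf⟩ => ⟨hf.linearIndepOn, hf.exists_isCompl⟩,
    fun ⟨hs, _, hP⟩ => isUnimodular_of_isCompl hs hP⟩

lemma IsUnimodular.add_notMem [Nontrivial R] (hs : IsUnimodular R s) (hx : x ∈ s) (hy : y ∈ s)
    (hxy : x ≠ y) : x + y ∉ s := by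
  obtain ⟨f, hf⟩ := hs
  intro hadd
  have hxadd : x ≠ x + y := fun h => IsUnimodular.zero_notMem ⟨f, hf⟩ (left_eq_add.1 h ▸ hy)
  simpa [hf.apply_self _ hx, hf.apply_of_ne _ hx _ hy hxy] using hf.apply_of_ne _ hx _ hadd hxadd

/-- Only the forms at `x` and `x + y` change: they become `f x - f y` and `f y`. -/
lemma IsUnimodular.insert_add_erase [Nontrivial R] [DecidableEq M] (hs : IsUnimodular R s)
    (hx : x ∈ s) (hy : y ∈ s) (hxy : x ≠ y) :
    IsUnimodular R (insert (x + y) (s.erase y)) := by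
  have hadd := hs.add_notMem hx hy hxy
  obtain ⟨f, hf⟩ := hs
  have hfx := hf.apply_self x hx
  have hfy := hf.apply_self y hy
  have hfxy := hf.apply_of_ne x hx y hy hxy
  have hfyx := hf.apply_of_ne y hy x hx hxy.symm
  refine ⟨fun z => if z = x + y then f y else if z = x then f x - f y else f z, ?_, ?_⟩
  · intro z hz
    have hfz := hf.apply_self z
    have hfyz := hf.apply_of_ne y hy z
    aesop
  · intro z hz w hw hzw
    have hfz := hf.apply_of_ne z
    have hfxw := hf.apply_of_ne x hx w
    have hfyw := hf.apply_of_ne y hy w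
    aesop

end Unimodular

section NatCombinations

variable {M : Type*} [AddCommMonoid M] {s : Set M} {φ : M →+ ℤ} {x : M}

lemma eq_zero_or_one_le_of_mem_closure (hφ : ∀ y ∈ s, 1 ≤ φ y)
    (hx : x ∈ AddSubmonoid.closure s) : x = 0 ∨ 1 ≤ φ x := by
  induction hx using AddSubmonoid.closure_induction with
  | mem y hy => exact .inr (hφ y hy)
  | zero => exact .inl rfl
  | add y z _ _ hy hz =>
    rcases hy with rfl | hy
    · simpa using hz
    · rcases hz with rfl | hz
      · simpa using Or.inr hy
      · exact .inr (by rw [map_add]; lia)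

lemma mem_of_mem_closure_of_apply_eq_one (hφ : ∀ y ∈ s, 1 ≤ φ y)
    (hx : x ∈ AddSubmonoid.closure s) (hx1 : φ x = 1) : x ∈ s := by
  induction hx using AddSubmonoid.closure_induction with
  | mem y hy => exact hy
  | zero => simp at hx1
  | add y z hy hz ihy ihz =>
    rw [map_add] at hx1
    rcases eq_zero_or_one_le_of_mem_closure hφ hy with rfl | hy1
    · simpa using ihz (by simpa using hx1)
    · rcases eq_zero_or_one_le_of_mem_closure hφ hz with rfl | hz1
      · simpa using ihy (by simpa using hx1)
      · lia

end NatCombinations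

section Indecomposable

variable {M : Type*} [AddCommGroup M] {s t : Finset M}

/-- The sum of the forms dual to `s` is `1` on `s`, hence at least `1` on `t`, so no element of `s`
is a sum of two or more elements of `t`. -/
lemma IsUnimodular.subset_of_closure_eq (hs : IsUnimodular ℤ s) (ht : IsUnimodular ℤ t)
    (h : AddSubmonoid.closure (s : Set M) = AddSubmonoid.closure (t : Set M)) : s ⊆ t := by
  obtain ⟨f, hf⟩ := hs
  let φ : M →+ ℤ := (∑ x ∈ s, f x : Module.Dual ℤ M).toAddMonoidHom
  have hφs : ∀ x ∈ s, φ x = 1 := by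
    intro x hx
    simp only [φ, LinearMap.toAddMonoidHom_coe, LinearMap.coe_sum, Finset.sum_apply]
    rw [Finset.sum_eq_single_of_mem x hx fun y hy hyx => hf.apply_of_ne _ hy _ hx hyx,
      hf.apply_self _ hx]
  have hφt : ∀ y ∈ (t : Set M), 1 ≤ φ y := by
    intro y hy
    have hy' : y ∈ AddSubmonoid.closure (s : Set M) := h ▸ AddSubmonoid.subset_closure hy
    exact (eq_zero_or_one_le_of_mem_closure (fun x hx => (hφs x hx).ge) hy').resolve_left
      fun h0 => ht.zero_notMem (h0 ▸ hy)
  intro x hx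
  exact mem_of_mem_closure_of_apply_eq_one hφt (h ▸ AddSubmonoid.subset_closure hx) (hφs x hx)

end Indecomposable

section Lattice

variable {n : ℕ}

lemma toR_add (x y : Fin n → ℤ) : toR (x + y) = toR x + toR y := by
  ext i
  simp [toR]

lemma toR_injective : Function.Injective (toR (n := n)) :=
  fun _ _ h => funext fun i => Int.cast_injective (congrFun h i)

lemma toR_sum_zsmul (s : Finset (Fin n → ℤ)) (k : (Fin n → ℤ) → ℤ) :
    toR (∑ x ∈ s, k x • x) = ∑ x ∈ s, (k x : ℝ) • toR x := by
  ext i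
  simp [toR, Finset.sum_apply]

lemma exists_dual_apply_toR_eq (f : Module.Dual ℤ (Fin n → ℤ)) :
    ∃ g : Module.Dual ℝ (Fin n → ℝ), ∀ x, g (toR x) = f x := by
  refine ⟨∑ i, (f (Pi.single i 1) : ℝ) • LinearMap.proj i, fun x => ?_⟩
  have hx : f x = ∑ i, x i * f (Pi.single i 1) := by
    conv_lhs => rw [pi_eq_sum_univ' x]
    simp only [map_sum, map_smul, smul_eq_mul]
  simp [hx, toR, mul_comm]

lemma linearIndependent_toR_iff (s : Finset (Fin n → ℤ)) :
    LinearIndependent ℝ (fun x : s => toR (x : Fin n → ℤ)) ↔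
      LinearIndepOn ℤ id (s : Set (Fin n → ℤ)) :=
  linearIndependent_algebraMap_comp_iff (R := ℤ) (S := ℝ) (v := fun x : s => (x : Fin n → ℤ))

lemma isUnimodular_int_iff {s : Finset (Fin n → ℤ)} : IsUnimodular ℤ s ↔
    LinearIndependent ℝ (fun x : s => toR (x : Fin n → ℤ)) ∧
      ∃ P : Submodule ℤ (Fin n → ℤ), IsCompl (Submodule.span ℤ (s : Set (Fin n → ℤ))) P := by
  rw [linearIndependent_toR_iff, isUnimodular_iff]

end Lattice

section Cone

variable {n : ℕ} {s t : Finset (Fin n → ℤ)}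

/-- The vector with the given nonnegative coordinates. Taking coordinates in `ℝ≥0` makes `coneOf s`
the image of the coordinate vectors supported in `s`. -/
noncomputable abbrev conicalSum (n : ℕ) : ((Fin n → ℤ) →₀ ℝ≥0) →ₗ[ℝ≥0] (Fin n → ℝ) :=
  Finsupp.linearCombination ℝ≥0 toR

lemma coneOf_eq_span (s : Finset (Fin n → ℤ)) :
    coneOf s = (Submodule.span ℝ≥0 (toR '' (s : Set (Fin n → ℤ))) : Set (Fin n → ℝ)) := by
  ext v
  rw [SetLike.mem_coe, Submodule.mem_span_image_finset_iff_exists_fun']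
  constructor
  · rintro ⟨c, hc, rfl⟩
    exact ⟨fun x => ⟨c x, hc x⟩, rfl⟩
  · rintro ⟨c, rfl⟩
    exact ⟨fun x => c x, fun x => (c x).2, rfl⟩

lemma mem_coneOf_iff {v : Fin n → ℝ} :
    v ∈ coneOf s ↔ ∃ a : (Fin n → ℤ) →₀ ℝ≥0, a.support ⊆ s ∧ conicalSum n a = v := by
  rw [coneOf_eq_span, SetLike.mem_coe, Finsupp.mem_span_image_iff_linearCombination]
  simp only [Finsupp.mem_supported, Finset.coe_subset]

lemma conicalSum_mem_coneOf {a : (Fin n → ℤ) →₀ ℝ≥0} (ha : a.support ⊆ s) :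
    conicalSum n a ∈ coneOf s :=
  mem_coneOf_iff.2 ⟨a, ha, rfl⟩

lemma toR_mem_coneOf {x : Fin n → ℤ} (hx : x ∈ s) : toR x ∈ coneOf s := by
  rw [coneOf_eq_span]
  exact Submodule.subset_span (Set.mem_image_of_mem _ hx)

lemma coneOf_subset_coneOf (h : ∀ x ∈ s, toR x ∈ coneOf t) : coneOf s ⊆ coneOf t := by
  rw [coneOf_eq_span t] at h ⊢
  rw [coneOf_eq_span s, SetLike.coe_subset_coe, Submodule.span_le]
  exact Set.image_subset_iff.2 h

lemma IsUnimodular.eq_of_conicalSum_eq (hs : IsUnimodular ℤ s) {a b : (Fin n → ℤ) →₀ ℝ≥0}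
    (ha : a.support ⊆ s) (hb : b.support ⊆ s) (hab : conicalSum n a = conicalSum n b) : a = b := by
  have hli : LinearIndepOn ℝ≥0 toR (s : Set (Fin n → ℤ)) :=
    (isUnimodular_int_iff.1 hs).1.restrict_scalars
      (by simpa [NNReal.smul_def] using NNReal.coe_injective)
  exact linearIndepOn_iffₛ.1 hli a (by simpa [Finsupp.mem_supported] using ha) b
    (by simpa [Finsupp.mem_supported] using hb) hab

lemma IsUnimodular.mem_closure_of_toR_mem_coneOf (hs : IsUnimodular ℤ s) {y : Fin n → ℤ}
    (hy : toR y ∈ coneOf s) : y ∈ AddSubmonoid.closure (s : Set (Fin n → ℤ)) := by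
  obtain ⟨f, hf⟩ := hs
  obtain ⟨c, hc, hyc⟩ := hy
  have hcoeff : ∀ x ∈ s, (f x y : ℝ) = c x := by
    intro x hx
    obtain ⟨g, hg⟩ := exists_dual_apply_toR_eq (f x)
    rw [← hg, hyc, map_sum, Finset.sum_eq_single_of_mem x hx]
    · simp [hg, hf.apply_self x hx]
    · intro z hz hzx
      simp [hg, hf.apply_of_ne x hx z hz hzx.symm]
  have hsum : y = ∑ x ∈ s, f x y • x := by
    apply toR_injective
    rw [toR_sum_zsmul, hyc]
    exact Finset.sum_congr rfl fun x hx => by rw [hcoeff x hx]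
  rw [hsum]
  refine sum_mem fun x hx => ?_
  lift f x y to ℕ using by exact_mod_cast (hc x).trans_eq (hcoeff x hx).symm with k
  rw [natCast_zsmul]
  exact nsmul_mem (AddSubmonoid.subset_closure hx) k

lemma IsUnimodular.closure_le_of_coneOf_subset (ht : IsUnimodular ℤ t) (h : coneOf s ⊆ coneOf t) :
    AddSubmonoid.closure (s : Set (Fin n → ℤ)) ≤ AddSubmonoid.closure (t : Set (Fin n → ℤ)) :=
  AddSubmonoid.closure_le.2 fun _ hx => ht.mem_closure_of_toR_mem_coneOf (h (toR_mem_coneOf hx))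

lemma IsUnimodular.subset_of_coneOf_eq (hs : IsUnimodular ℤ s) (ht : IsUnimodular ℤ t)
    (h : coneOf s = coneOf t) : s ⊆ t :=
  hs.subset_of_closure_eq ht <|
    (ht.closure_le_of_coneOf_subset h.subset).antisymm (hs.closure_le_of_coneOf_subset h.superset)

end Cone

section Fan

/-- The cone over the geometric realization of the abstract simplicial complex `Δ`: nonnegative
coordinate vectors whose support is a face of `Δ`. -/
def coordinateCone {ι : Type*} (Δ : Finset (Finset ι)) : Set (ι →₀ ℝ≥0) :=
  {a | a.support ∈ Δ}

lemma mem_coordinateCone {ι : Type*} {Δ : Finset (Finset ι)} {a : ι →₀ ℝ≥0} :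
    a ∈ coordinateCone Δ ↔ a.support ∈ Δ :=
  Iff.rfl

variable {n : ℕ} {Δ : Finset (Finset (Fin n → ℤ))}

lemma iUnion_coneOf_eq_image (hΔ : IsLowerSet (Δ : Set (Finset (Fin n → ℤ)))) :
    ⋃ s ∈ Δ, coneOf s = conicalSum n '' coordinateCone Δ := by
  ext v
  simp only [Set.mem_iUnion, exists_prop, Set.mem_image]
  constructor
  · rintro ⟨s, hs, hv⟩
    obtain ⟨a, ha, rfl⟩ := mem_coneOf_iff.1 hv
    exact ⟨a, hΔ ha hs, rfl⟩
  · rintro ⟨a, ha, rfl⟩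
    exact ⟨a.support, ha, conicalSum_mem_coneOf subset_rfl⟩

lemma IsSmoothFan.isUnimodular (hΔ : IsSmoothFan Δ) {s : Finset (Fin n → ℤ)} (hs : s ∈ Δ) :
    IsUnimodular ℤ s :=
  isUnimodular_int_iff.2 ⟨hΔ.1 s hs, hΔ.2.1 s hs⟩

lemma IsSmoothFan.isLowerSet (hΔ : IsSmoothFan Δ) : IsLowerSet (Δ : Set (Finset (Fin n → ℤ))) :=
  fun s t hts hs => hΔ.2.2.1 s hs t hts

lemma IsSmoothFan.injOn_conicalSum (hΔ : IsSmoothFan Δ) :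
    Set.InjOn (conicalSum n) (coordinateCone Δ) := by
  intro a ha b hb hab
  obtain ⟨⟨u, hu, hcapu⟩, ⟨w, hw, hcapw⟩⟩ := hΔ.2.2.2 a.support ha b.support hb
  have huw : u ⊆ w := (hΔ.isUnimodular (hΔ.isLowerSet hu ha)).subset_of_coneOf_eq
    (hΔ.isUnimodular (hΔ.isLowerSet hw hb)) (hcapu.symm.trans hcapw)
  have hmem : conicalSum n a ∈ coneOf u := by
    rw [← hcapu]
    exact ⟨conicalSum_mem_coneOf subset_rfl, hab ▸ conicalSum_mem_coneOf subset_rfl⟩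
  obtain ⟨c, hc, hca⟩ := mem_coneOf_iff.1 hmem
  have hca' : c = a := (hΔ.isUnimodular ha).eq_of_conicalSum_eq (hc.trans hu) subset_rfl hca
  have hcb : c = b := (hΔ.isUnimodular hb).eq_of_conicalSum_eq (hc.trans (huw.trans hw)) subset_rfl
    (hca.trans hab)
  exact hca'.symm.trans hcb

lemma coneOf_inter_coneOf (hlower : IsLowerSet (Δ : Set (Finset (Fin n → ℤ))))
    (hinj : Set.InjOn (conicalSum n) (coordinateCone Δ)) {s t : Finset (Fin n → ℤ)}
    (hs : s ∈ Δ) (ht : t ∈ Δ) : coneOf s ∩ coneOf t = coneOf (s ∩ t) := by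
  apply Set.Subset.antisymm
  · rintro v ⟨hvs, hvt⟩
    obtain ⟨a, ha, rfl⟩ := mem_coneOf_iff.1 hvs
    obtain ⟨b, hb, hba⟩ := mem_coneOf_iff.1 hvt
    obtain rfl : b = a := hinj (hlower hb ht) (hlower ha hs) hba
    exact conicalSum_mem_coneOf (Finset.subset_inter ha hb)
  · exact Set.subset_inter
      (coneOf_subset_coneOf fun x hx => toR_mem_coneOf (Finset.inter_subset_left hx))
      (coneOf_subset_coneOf fun x hx => toR_mem_coneOf (Finset.inter_subset_right hx))

lemma isSmoothFan_iff : IsSmoothFan Δ ↔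
    (∀ s ∈ Δ, IsUnimodular ℤ s) ∧ IsLowerSet (Δ : Set (Finset (Fin n → ℤ))) ∧
      Set.InjOn (conicalSum n) (coordinateCone Δ) := by
  constructor
  · exact fun hΔ => ⟨fun _ => hΔ.isUnimodular, hΔ.isLowerSet, hΔ.injOn_conicalSum⟩
  · rintro ⟨hunim, hlower, hinj⟩
    refine ⟨fun s hs => (isUnimodular_int_iff.1 (hunim s hs)).1,
      fun s hs => (isUnimodular_int_iff.1 (hunim s hs)).2,
      fun s hs t hts => hlower hts hs, fun s hs t ht => ?_⟩
    have hinter := coneOf_inter_coneOf hlower hinj hs ht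
    exact ⟨⟨s ∩ t, Finset.inter_subset_left, hinter⟩, ⟨s ∩ t, Finset.inter_subset_right, hinter⟩⟩

lemma IsSmoothFan.add_notMem (hΔ : IsSmoothFan Δ) {x y : Fin n → ℤ} (hxy : x ≠ y)
    (hmem : {x, y} ∈ Δ) {s : Finset (Fin n → ℤ)} (hs : s ∈ Δ) : x + y ∉ s := by
  intro hadd
  have hsingle : Finsupp.single (x + y) (1 : ℝ≥0) ∈ coordinateCone Δ :=
    hΔ.isLowerSet (Finsupp.support_single_subset.trans (Finset.singleton_subset_iff.2 hadd)) hs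
  have hpair : Finsupp.single x (1 : ℝ≥0) + Finsupp.single y 1 ∈ coordinateCone Δ := by
    rwa [mem_coordinateCone, Finsupp.support_single_add_single hxy one_ne_zero one_ne_zero]
  have heq := hΔ.injOn_conicalSum hsingle hpair (by simp [toR_add])
  have hnotMem := (hΔ.isUnimodular hmem).add_notMem (Finset.mem_insert_self x {y})
    (Finset.mem_insert_of_mem (Finset.mem_singleton_self y)) hxy
  rw [Finset.mem_insert, Finset.mem_singleton, not_or] at hnotMem
  simpa [hnotMem.1, hnotMem.2] using DFunLike.congr_fun heq (x + y)

end Fan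

section Collapse

variable {ι : Type*} {p q r : ι}

/-- Rewrites coordinates after the substitution `r = p + q`: the coordinate at `r` is removed and
added to the coordinates at `p` and `q`. -/
noncomputable def collapse (p q r : ι) (a : ι →₀ ℝ≥0) : ι →₀ ℝ≥0 :=
  a.erase r + (Finsupp.single p (a r) + Finsupp.single q (a r))

lemma collapse_apply_left (hpq : p ≠ q) (hpr : p ≠ r) (a : ι →₀ ℝ≥0) :
    collapse p q r a p = a p + a r := by
  simp [collapse, hpq, hpr]

lemma collapse_apply_right (hpq : p ≠ q) (hqr : q ≠ r) (a : ι →₀ ℝ≥0) :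
    collapse p q r a q = a q + a r := by
  simp [collapse, hpq.symm, hqr]

lemma support_collapse_subset {a : ι →₀ ℝ≥0} {s : Finset ι} (hs : ∀ x ∈ a.support, x ≠ r → x ∈ s)
    (hr : r ∈ a.support → p ∈ s ∧ q ∈ s) : (collapse p q r a).support ⊆ s := by
  classical
  refine Finsupp.support_add.trans (Finset.union_subset (fun x hx => ?_)
    (Finsupp.support_add.trans (Finset.union_subset (fun x hx => ?_) (fun x hx => ?_))))
  · rw [Finsupp.support_erase, Finset.mem_erase] at hx
    exact hs x hx.2 hx.1
  · obtain ⟨rfl, har⟩ := (Finsupp.mem_support_single _ _ _).1 hx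
    exact (hr (Finsupp.mem_support_iff.2 har)).1
  · obtain ⟨rfl, har⟩ := (Finsupp.mem_support_single _ _ _).1 hx
    exact (hr (Finsupp.mem_support_iff.2 har)).2

/-- If `a p` or `a q` vanishes, then `a r` is recovered from `b = collapse p q r a` as
`min (b p) (b q)`. -/
lemma injOn_collapse (hpq : p ≠ q) (hpr : p ≠ r) (hqr : q ≠ r) :
    Set.InjOn (collapse p q r) {a | a p = 0 ∨ a q = 0} := by
  have hmin : ∀ a : ι →₀ ℝ≥0, a p = 0 ∨ a q = 0 →
      a r = min (collapse p q r a p) (collapse p q r a q) := by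
    intro a ha
    rw [collapse_apply_left hpq hpr, collapse_apply_right hpq hqr]
    rcases ha with ha | ha <;> simp [ha]
  intro a ha b hb hab
  have hr : a r = b r := by rw [hmin a ha, hmin b hb, hab]
  have herase : a.erase r = b.erase r := by
    rw [collapse, collapse, hr] at hab
    exact add_right_cancel hab
  rw [← a.erase_add_single r, ← b.erase_add_single r, herase, hr]

/-- Moves the common part of the coordinates at `p` and `q` to the coordinate at `r`; inverse to
`collapse`. -/
noncomputable def expand (p q r : ι) (b : ι →₀ ℝ≥0) : ι →₀ ℝ≥0 :=
  b - (Finsupp.single p (min (b p) (b q)) + Finsupp.single q (min (b p) (b q))) +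
    Finsupp.single r (min (b p) (b q))

lemma expand_comm (p q r : ι) (b : ι →₀ ℝ≥0) : expand p q r b = expand q p r b := by
  rw [expand, expand, min_comm, add_comm (Finsupp.single p _)]

lemma expand_apply_left (hpq : p ≠ q) (hpr : p ≠ r) (b : ι →₀ ℝ≥0) :
    expand p q r b p = b p - b q := by
  simp [expand, hpq, hpr, tsub_min]

lemma expand_apply_right (hpq : p ≠ q) (hqr : q ≠ r) (b : ι →₀ ℝ≥0) :
    expand p q r b q = b q - b p := by
  rw [expand_comm, expand_apply_left hpq.symm hqr]

lemma expand_apply_of_ne {x : ι} (hxp : x ≠ p) (hxq : x ≠ q) (hxr : x ≠ r) (b : ι →₀ ℝ≥0) :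
    expand p q r b x = b x := by
  simp [expand, hxp, hxq, hxr]

lemma expand_apply_new (hpr : p ≠ r) (hqr : q ≠ r) {b : ι →₀ ℝ≥0} (hb : b r = 0) :
    expand p q r b r = min (b p) (b q) := by
  simp [expand, hpr.symm, hqr.symm, hb]

lemma expand_eq_self {b : ι →₀ ℝ≥0} (hb : b p = 0 ∨ b q = 0) : expand p q r b = b := by
  have hmin : min (b p) (b q) = 0 := by rcases hb with hb | hb <;> simp [hb]
  simp [expand, hmin]

lemma collapse_expand (hpq : p ≠ q) (hpr : p ≠ r) (hqr : q ≠ r) {b : ι →₀ ℝ≥0} (hb : b r = 0) :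
    collapse p q r (expand p q r b) = b := by
  ext1 x
  rcases eq_or_ne x p with rfl | hxp
  · rw [collapse_apply_left hpq hpr, expand_apply_left hpq hpr, expand_apply_new hpr hqr hb,
      tsub_add_min]
  rcases eq_or_ne x q with rfl | hxq
  · rw [collapse_apply_right hpq hqr, expand_apply_right hpq hqr, expand_apply_new hpr hqr hb,
      min_comm, tsub_add_min]
  rcases eq_or_ne x r with rfl | hxr
  · simp [collapse, hxp, hxq, hb]
  · simp [collapse, hxp, hxq, hxr, expand_apply_of_ne]

lemma support_expand_subset [DecidableEq ι] (hpq : p ≠ q) (hpr : p ≠ r) {b : ι →₀ ℝ≥0}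
    (hb : b p ≤ b q) (hq : q ∈ b.support) :
    (expand p q r b).support ⊆ insert r (b.support.erase p) := by
  intro x hx
  rcases eq_or_ne x r with rfl | hxr
  · exact Finset.mem_insert_self _ _
  rcases eq_or_ne x p with rfl | hxp
  · simp [expand_apply_left hpq hpr, tsub_eq_zero_of_le hb] at hx
  refine Finset.mem_insert_of_mem (Finset.mem_erase.2 ⟨hxp, ?_⟩)
  rcases eq_or_ne x q with rfl | hxq
  · exact hq
  · rwa [Finsupp.mem_support_iff, expand_apply_of_ne hxp hxq hxr, ← Finsupp.mem_support_iff] at hx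

end Collapse

section Stellar

variable {n : ℕ} {Δ : Finset (Finset (Fin n → ℤ))} {e1 e2 : Fin n → ℤ} {s : Finset (Fin n → ℤ)}

lemma conicalSum_collapse (e1 e2 : Fin n → ℤ) (a : (Fin n → ℤ) →₀ ℝ≥0) :
    conicalSum n (collapse e1 e2 (e1 + e2) a) = conicalSum n a := by
  conv_rhs => rw [← a.erase_add_single (e1 + e2)]
  simp [collapse, toR_add]

lemma mem_stellar_iff : s ∈ stellar Δ e1 e2 ↔
    (s ∈ Δ ∧ ¬ {e1, e2} ⊆ s) ∨
      ∃ t ∈ Δ, {e1, e2} ⊆ t ∧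
        (s ⊆ insert (e1 + e2) (t.erase e2) ∨ s ⊆ insert (e1 + e2) (t.erase e1)) := by
  simp [stellar, and_assoc]

lemma isLowerSet_stellar (hΔ : IsLowerSet (Δ : Set (Finset (Fin n → ℤ)))) :
    IsLowerSet (stellar Δ e1 e2 : Set (Finset (Fin n → ℤ))) := by
  intro s t hts hs
  rw [Finset.mem_coe, mem_stellar_iff] at hs ⊢
  rcases hs with ⟨hs, hpair⟩ | ⟨u, hu, hpair, hsu⟩
  · exact .inl ⟨hΔ hts hs, fun h => hpair (h.trans hts)⟩
  · exact .inr ⟨u, hu, hpair, hsu.imp hts.trans hts.trans⟩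

lemma isUnimodular_of_mem_stellar (hΔ : ∀ s ∈ Δ, IsUnimodular ℤ s) (hne : e1 ≠ e2)
    (hs : s ∈ stellar Δ e1 e2) : IsUnimodular ℤ s := by
  rcases mem_stellar_iff.1 hs with ⟨hs, -⟩ | ⟨t, ht, hpair, hst⟩
  · exact hΔ s hs
  · obtain ⟨h1, h2⟩ : e1 ∈ t ∧ e2 ∈ t := by simpa [Finset.insert_subset_iff] using hpair
    rcases hst with hst | hst
    · exact ((hΔ t ht).insert_add_erase h1 h2 hne).mono hst
    · rw [add_comm] at hst
      exact ((hΔ t ht).insert_add_erase h2 h1 hne.symm).mono hst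

lemma exists_mem_of_mem_stellar (hs : s ∈ stellar Δ e1 e2) :
    ∃ t ∈ Δ, (∀ x ∈ s, x ≠ e1 + e2 → x ∈ t) ∧ (e1 + e2 ∈ s → e1 + e2 ∈ t ∨ {e1, e2} ⊆ t) := by
  rcases mem_stellar_iff.1 hs with ⟨hs, -⟩ | ⟨t, ht, hpair, hst⟩
  · exact ⟨s, hs, fun x hx _ => hx, .inl⟩
  · refine ⟨t, ht, fun x hx hne => ?_, fun _ => .inr hpair⟩
    rcases hst with hst | hst
    · exact Finset.mem_of_mem_erase (Finset.mem_of_mem_insert_of_ne (hst hx) hne)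
    · exact Finset.mem_of_mem_erase (Finset.mem_of_mem_insert_of_ne (hst hx) hne)

lemma exists_coneOf_subset_of_mem_stellar (hs : s ∈ stellar Δ e1 e2) :
    ∃ t ∈ Δ, coneOf s ⊆ coneOf t := by
  obtain ⟨t, ht, hst, hadd⟩ := exists_mem_of_mem_stellar hs
  refine ⟨t, ht, coneOf_subset_coneOf fun x hx => ?_⟩
  rcases eq_or_ne x (e1 + e2) with rfl | hx'
  · rcases hadd hx with hadd | hpair
    · exact toR_mem_coneOf hadd
    · have h1 : toR e1 ∈ coneOf t := toR_mem_coneOf (hpair (by simp))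
      have h2 : toR e2 ∈ coneOf t := toR_mem_coneOf (hpair (by simp))
      rw [coneOf_eq_span] at h1 h2 ⊢
      rw [toR_add]
      exact add_mem h1 h2
  · exact toR_mem_coneOf (hst x hx hx')

lemma not_pair_subset_of_mem_stellar (he1 : e1 ≠ 0) (he2 : e2 ≠ 0) (hs : s ∈ stellar Δ e1 e2) :
    ¬ {e1, e2} ⊆ s := by
  rcases mem_stellar_iff.1 hs with ⟨-, hpair⟩ | ⟨t, -, -, hst | hst⟩
  · exact hpair
  · intro hpair
    have he2s : e2 ∈ insert (e1 + e2) (t.erase e2) := hst (hpair (by simp))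
    simp [he1] at he2s
  · intro hpair
    have he1s : e1 ∈ insert (e1 + e2) (t.erase e1) := hst (hpair (by simp))
    simp [he2] at he1s

lemma mapsTo_collapse_stellar (hlower : IsLowerSet (Δ : Set (Finset (Fin n → ℤ))))
    (hadd : ∀ s ∈ Δ, e1 + e2 ∉ s) :
    Set.MapsTo (collapse e1 e2 (e1 + e2)) (coordinateCone (stellar Δ e1 e2))
      (coordinateCone Δ) := by
  intro a ha
  obtain ⟨t, ht, hat, haddt⟩ := exists_mem_of_mem_stellar ha
  refine hlower (support_collapse_subset hat fun h => ?_) ht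
  simpa [Finset.insert_subset_iff] using (haddt h).resolve_left (hadd t ht)

lemma injOn_collapse_stellar (he1 : e1 ≠ 0) (he2 : e2 ≠ 0) (hne : e1 ≠ e2) :
    Set.InjOn (collapse e1 e2 (e1 + e2)) (coordinateCone (stellar Δ e1 e2)) := by
  refine (injOn_collapse hne (by simpa) (by simpa)).mono fun a ha => ?_
  have hpair := not_pair_subset_of_mem_stellar he1 he2 ha
  rw [Finset.insert_subset_iff, Finset.singleton_subset_iff, not_and_or] at hpair
  simpa using hpair

lemma expand_mem_coordinateCone_stellar (he1 : e1 ≠ 0) (he2 : e2 ≠ 0) (hne : e1 ≠ e2)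
    {b : (Fin n → ℤ) →₀ ℝ≥0} (hb : b ∈ coordinateCone Δ) :
    expand e1 e2 (e1 + e2) b ∈ coordinateCone (stellar Δ e1 e2) := by
  rw [mem_coordinateCone, mem_stellar_iff]
  by_cases hpair : {e1, e2} ⊆ b.support
  · refine .inr ⟨b.support, hb, hpair, ?_⟩
    rcases le_total (b e1) (b e2) with hle | hle
    · exact .inr (support_expand_subset hne (by simpa) hle (hpair (by simp)))
    · rw [expand_comm]
      exact .inl (support_expand_subset hne.symm (by simpa) hle (hpair (by simp)))
  · have hzero : b e1 = 0 ∨ b e2 = 0 := by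
      rw [Finset.insert_subset_iff, Finset.singleton_subset_iff, not_and_or] at hpair
      simpa using hpair
    rw [expand_eq_self hzero]
    exact .inl ⟨hb, hpair⟩

lemma IsSmoothFan.bijOn_collapse_stellar (hΔ : IsSmoothFan Δ) (hne : e1 ≠ e2)
    (hmem : {e1, e2} ∈ Δ) :
    Set.BijOn (collapse e1 e2 (e1 + e2)) (coordinateCone (stellar Δ e1 e2))
      (coordinateCone Δ) := by
  have hzero := (hΔ.isUnimodular hmem).zero_notMem
  have he1 : e1 ≠ 0 := by rintro rfl; simp at hzero
  have he2 : e2 ≠ 0 := by rintro rfl; simp at hzero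
  have hadd : ∀ s ∈ Δ, e1 + e2 ∉ s := fun s => hΔ.add_notMem hne hmem
  refine ⟨mapsTo_collapse_stellar hΔ.isLowerSet hadd, injOn_collapse_stellar he1 he2 hne,
    fun b hb => ⟨_, expand_mem_coordinateCone_stellar he1 he2 hne hb, ?_⟩⟩
  exact collapse_expand hne (by simpa) (by simpa) (Finsupp.notMem_support_iff.1 (hadd _ hb))

end Stellar

/-- Proposition 4.1 (1) and (2): an elementary stellar subdivision of a smooth fan along a two
dimensional cone is again a smooth fan, and it is a subdivision: each of its cones is
contained in a cone of the original fan and the supports coincide. -/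
theorem stmt11 {n : ℕ} (Δ : Finset (Finset (Fin n → ℤ))) (hΔ : IsSmoothFan Δ)
    (e1 e2 : Fin n → ℤ) (hne : e1 ≠ e2) (hmem : ({e1, e2} : Finset (Fin n → ℤ)) ∈ Δ) :
    IsSmoothFan (stellar Δ e1 e2) ∧
    (∀ s ∈ stellar Δ e1 e2, ∃ t ∈ Δ, coneOf s ⊆ coneOf t) ∧
    (⋃ s ∈ stellar Δ e1 e2, coneOf s) = ⋃ s ∈ Δ, coneOf s := by
  obtain ⟨hunim, hlower, hinj⟩ := isSmoothFan_iff.1 hΔ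
  have hlower' := isLowerSet_stellar (e1 := e1) (e2 := e2) hlower
  have hbij := hΔ.bijOn_collapse_stellar hne hmem
  have hcollapse : conicalSum n ∘ collapse e1 e2 (e1 + e2) = conicalSum n :=
    funext (conicalSum_collapse e1 e2)
  refine ⟨isSmoothFan_iff.2 ⟨fun s => isUnimodular_of_mem_stellar hunim hne, hlower', ?_⟩,
    fun s => exists_coneOf_subset_of_mem_stellar, ?_⟩
  · rw [← hcollapse]
    exact hinj.comp hbij.injOn hbij.mapsTo
  · rw [iUnion_coneOf_eq_image hlower', iUnion_coneOf_eq_image hlower, ← hbij.image_eq,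
      ← Set.image_comp, hcollapse]
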